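/- Let a, b, c be pairwise distinct elements of ℂ ∖ {0,1}, and set u₁ = 1 + u + v, v₁ = a + b·u + c·v. Then there is a ℂ-algebra isomorphism between the function fields Frac(ℂ[t,u,v,y]/(y³ − t³·u·v·(1+u₁·t)(1+v₁·t))) and Frac(ℂ[t₁,u,v,y₁]/(y₁³·u₁v₁(v₁−u₁) − u·v·t₁(t₁+1))); i.e., the affine hypersurface X₂: y³ = t³·u·v·(1+u₁·t)(1+v₁·t) is birationally equivalent to the affine hypersurface Y: y₁³·u₁v₁(v₁−u₁) = u·v·t₁(t₁+1). An isomorphism is induced by the substitution t = (1/v₁ − 1/u₁)·t₁ − 1/u₁, y = t·u₁v₁·(1/u₁ − 1/v₁)·y₁ (with u, v unchanged). -/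

import Mathlib

/-!
Formalization conventions.

* The function field of an affine variety whose coordinate ring `ℂ[x₁,…,xₙ]/I` is an
  integral domain is formalized as `FractionRing` of that coordinate ring (for the total
  rings of fractions of the rings appearing here this is the function field).
* Two such varieties are birationally equivalent iff their function fields are
  isomorphic as `ℂ`-algebras.
-/

noncomputable section
open MvPolynomial

/-- `ω = exp(2πi/3) ∈ ℂ`, a fixed primitive cube root of unity. -/
def ω : ℂ := Complex.exp (2 * Real.pi * Complex.I / 3)

/-- Coordinate ring of the affine hypersurface `f = 0` in `ℂⁿ`. -/
abbrev HSurf {n : ℕ} (f : MvPolynomial (Fin n) ℂ) : Type :=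
  MvPolynomial (Fin n) ℂ ⧸ Ideal.span {f}

/-- Coordinate ring of the affine variety `f = g = 0` in `ℂⁿ`. -/
abbrev HSurf2 {n : ℕ} (f g : MvPolynomial (Fin n) ℂ) : Type :=
  MvPolynomial (Fin n) ℂ ⧸ Ideal.span {f, g}

/-- The image of a polynomial `p` in the function field of the hypersurface `f = 0`. -/
def cls {n : ℕ} (f : MvPolynomial (Fin n) ℂ) (p : MvPolynomial (Fin n) ℂ) :
    FractionRing (HSurf f) :=
  algebraMap (HSurf f) (FractionRing (HSurf f)) (Ideal.Quotient.mk _ p)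

/-- The image of a polynomial `p` in the function field of the variety `f = g = 0`. -/
def cls2 {n : ℕ} (f g : MvPolynomial (Fin n) ℂ) (p : MvPolynomial (Fin n) ℂ) :
    FractionRing (HSurf2 f g) :=
  algebraMap (HSurf2 f g) (FractionRing (HSurf2 f g)) (Ideal.Quotient.mk _ p)

/-- `u₁ = 1 + u + v` (variables: `u = X 1`, `v = X 2`; this is used both for
`X₂` (coordinates `t = X 0, u = X 1, v = X 2, y = X 3`) and for
`Y` (coordinates `t₁ = X 0, u = X 1, v = X 2, y₁ = X 3`)). -/
def u₁P : MvPolynomial (Fin 4) ℂ := 1 + X 1 + X 2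

/-- `v₁ = a + b·u + c·v`. -/
def v₁P (a b c : ℂ) : MvPolynomial (Fin 4) ℂ := C a + C b * X 1 + C c * X 2

/-- Defining polynomial of the affine hypersurface `X₂ : y³ = t³·u·v·(1+u₁·t)(1+v₁·t)`. -/
def pX₂ (a b c : ℂ) : MvPolynomial (Fin 4) ℂ :=
  X 3 ^ 3 - X 0 ^ 3 * X 1 * X 2 * (1 + u₁P * X 0) * (1 + v₁P a b c * X 0)

/-- Defining polynomial of the affine hypersurface `Y : y₁³·u₁v₁(v₁−u₁) = u·v·t₁(t₁+1)`. -/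
def pY (a b c : ℂ) : MvPolynomial (Fin 4) ℂ :=
  X 3 ^ 3 * u₁P * v₁P a b c * (v₁P a b c - u₁P) - X 1 * X 2 * X 0 * (X 0 + 1)


/-- Isomorphic localizations at regular elements give isomorphic total fraction rings. -/
theorem frac_equiv {R R' : Type} [CommRing R] [CommRing R'] [Algebra ℂ R] [Algebra ℂ R']
    (h : R) (h' : R') (hh : h ∈ nonZeroDivisors R) (hh' : h' ∈ nonZeroDivisors R')
    (e : Localization.Away h ≃ₐ[ℂ] Localization.Away h') :
    ∃ (E : FractionRing R ≃ₐ[ℂ] FractionRing R')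
      (j : Localization.Away h' →ₐ[ℂ] FractionRing R'),
      (∀ r, j (algebraMap R' _ r) = algebraMap R' _ r) ∧
      ∀ r, E (algebraMap R _ r) = j (e (algebraMap R _ r)) := by
  have le : Submonoid.powers h ≤ nonZeroDivisors R := Submonoid.powers_le.mpr hh
  have le' : Submonoid.powers h' ≤ nonZeroDivisors R' := Submonoid.powers_le.mpr hh'
  let a1 : Algebra (Localization.Away h) (FractionRing R) :=
    IsLocalization.localizationAlgebraOfSubmonoidLe _ _ (Submonoid.powers h) _ le
  let a2 : Algebra (Localization.Away h') (FractionRing R') :=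
    IsLocalization.localizationAlgebraOfSubmonoidLe _ _ (Submonoid.powers h') _ le'
  have t1 : IsScalarTower R (Localization.Away h) (FractionRing R) :=
    IsLocalization.localization_isScalarTower_of_submonoid_le _ _ (Submonoid.powers h) _ le
  have t2 : IsScalarTower R' (Localization.Away h') (FractionRing R') :=
    IsLocalization.localization_isScalarTower_of_submonoid_le _ _ (Submonoid.powers h') _ le'
  have f1 : IsFractionRing (Localization.Away h) (FractionRing R) :=
    IsFractionRing.isFractionRing_of_isLocalization (Submonoid.powers h) _ _ le
  have f2 : IsFractionRing (Localization.Away h') (FractionRing R') :=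
    IsFractionRing.isFractionRing_of_isLocalization (Submonoid.powers h') _ _ le'
  have s1 : IsScalarTower ℂ (Localization.Away h) (FractionRing R) :=
    IsScalarTower.of_algebraMap_eq fun x => by
      rw [IsScalarTower.algebraMap_apply ℂ R (FractionRing R),
        IsScalarTower.algebraMap_apply ℂ R (Localization.Away h),
        ← IsScalarTower.algebraMap_apply R (Localization.Away h) (FractionRing R)]
  have s2 : IsScalarTower ℂ (Localization.Away h') (FractionRing R') :=
    IsScalarTower.of_algebraMap_eq fun x => by
      rw [IsScalarTower.algebraMap_apply ℂ R' (FractionRing R'),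
        IsScalarTower.algebraMap_apply ℂ R' (Localization.Away h'),
        ← IsScalarTower.algebraMap_apply R' (Localization.Away h') (FractionRing R')]
  refine ⟨IsFractionRing.algEquivOfAlgEquiv e, IsScalarTower.toAlgHom ℂ _ _, fun r => ?_,
    fun r => ?_⟩
  · exact (IsScalarTower.algebraMap_apply R' (Localization.Away h') (FractionRing R') r).symm
  · rw [IsScalarTower.algebraMap_apply R (Localization.Away h) (FractionRing R) r]
    exact IsFractionRing.algEquivOfAlgEquiv_algebraMap e _

/-- Universal property of the localized coordinate ring. -/
theorem exists_hom (f h : MvPolynomial (Fin 4) ℂ) {B : Type} [CommRing B] [Algebra ℂ B]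
    (p : Fin 4 → B) (hf : aeval p f = 0) (hu : IsUnit (aeval p h)) :
    ∃ φ : Localization.Away (Ideal.Quotient.mk (Ideal.span {f}) h) →ₐ[ℂ] B,
      ∀ q, φ (algebraMap (HSurf f) _ (Ideal.Quotient.mk _ q)) = aeval p q := by
  let g : HSurf f →ₐ[ℂ] B := Ideal.Quotient.liftₐ (Ideal.span {f}) (aeval p) (by
    intro x hx
    obtain ⟨y, rfl⟩ := Ideal.mem_span_singleton.mp hx
    simp [hf])
  have hg : ∀ q, g (Ideal.Quotient.mk _ q) = aeval p q := fun q => rfl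
  have hy : ∀ y : Submonoid.powers (Ideal.Quotient.mk (Ideal.span {f}) h), IsUnit (g y) := by
    rintro ⟨_, n, rfl⟩
    simp only [map_pow, hg]
    exact hu.pow n
  refine ⟨IsLocalization.liftAlgHom (M := Submonoid.powers _) (f := g) hy, fun q => ?_⟩
  rw [← hg]
  exact IsLocalization.lift_eq (M := Submonoid.powers _) (g := (g : HSurf f →+* B)) hy _

theorem hom_ext4 (f h : MvPolynomial (Fin 4) ℂ) {B : Type} [CommRing B] [Algebra ℂ B]
    (φ ψ : Localization.Away (Ideal.Quotient.mk (Ideal.span {f}) h) →ₐ[ℂ] B)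
    (H : ∀ i, φ (algebraMap (HSurf f) _ (Ideal.Quotient.mk _ (X i))) =
      ψ (algebraMap (HSurf f) _ (Ideal.Quotient.mk _ (X i)))) : φ = ψ := by
  apply IsLocalization.algHom_ext (Submonoid.powers (Ideal.Quotient.mk (Ideal.span {f}) h))
  apply Ideal.Quotient.algHom_ext
  apply MvPolynomial.algHom_ext
  exact H

theorem nzd_of_relPrime (f h : MvPolynomial (Fin 4) ℂ) (H : IsRelPrime f h) :
    Ideal.Quotient.mk (Ideal.span {f}) h ∈ nonZeroDivisors (HSurf f) := by
  rw [mem_nonZeroDivisors_iff_right]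
  intro x hx
  obtain ⟨x, rfl⟩ := Ideal.Quotient.mk_surjective x
  rw [← map_mul, Ideal.Quotient.eq_zero_iff_dvd] at hx
  rw [Ideal.Quotient.eq_zero_iff_dvd]
  exact H.dvd_of_dvd_mul_right hx

/-- An irreducible `q` is coprime to `f` if some zero of `q` is not a zero of `f`. -/
theorem relPrime_of_point (f q : MvPolynomial (Fin 4) ℂ) (hq : Irreducible q) (x : Fin 4 → ℂ)
    (h0 : aeval x q = 0) (h1 : aeval x f ≠ 0) : IsRelPrime f q := by
  refine (hq.isRelPrime_iff_not_dvd.mpr ?_).symm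
  rintro ⟨r, rfl⟩
  exact h1 (by rw [map_mul, h0, zero_mul])

theorem irr_lin (α β γ : ℂ) (hβ : β ≠ 0) :
    Irreducible (C α + C β * X 1 + C γ * X 2 : MvPolynomial (Fin 4) ℂ) := by
  have : (C α + C β * X 1 + C γ * X 2 : MvPolynomial (Fin 4) ℂ)
      = C β * X 1 + (C α + C γ * X 2) := by ring
  rw [this]
  have hu : IsUnit (C β : MvPolynomial (Fin 4) ℂ) := (isUnit_iff_ne_zero.mpr hβ).map C
  apply irreducible_mul_X_add
  · exact hu.ne_zero
  · simp
  · intro h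
    have := vars_add_subset _ _ h
    simp only [vars_C, Finset.empty_union] at this
    have := vars_mul _ _ this
    simp at this
  · exact hu.isRelPrime_left

theorem zero_notMem_vars_lin (α β γ : ℂ) :
    (0 : Fin 4) ∉ (C α + C β * X 1 + C γ * X 2 : MvPolynomial (Fin 4) ℂ).vars := by
  intro h
  rcases Finset.mem_union.mp (vars_add_subset _ _ h) with h | h
  · rcases Finset.mem_union.mp (vars_add_subset _ _ h) with h | h
    · simp at h
    · have := vars_mul _ _ h
      simp at this
  · have := vars_mul _ _ h
    simp at this

theorem u₁P_eq : u₁P = C 1 + C 1 * X 1 + C 1 * X 2 := by simp [u₁P]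

theorem D_eq (a b c : ℂ) :
    v₁P a b c - u₁P = C (a - 1) + C (b - 1) * X 1 + C (c - 1) * X 2 := by
  simp [u₁P, v₁P]; ring

theorem tau_eq (a b c : ℂ) :
    (u₁P - v₁P a b c) * X 0 - v₁P a b c =
    (C (1 - a) + C (1 - b) * X 1 + C (1 - c) * X 2) * X 0 +
      (C (-a) + C (-b) * X 1 + C (-c) * X 2) := by
  simp [u₁P, v₁P]; ring

theorem irr_tau (a b c : ℂ) (hb0 : b ≠ 0) (hb1 : b ≠ 1) (hab : a ≠ b) :
    Irreducible ((u₁P - v₁P a b c) * X 0 - v₁P a b c) := by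
  rw [tau_eq]
  apply irreducible_mul_X_add
  · exact (irr_lin _ _ _ (sub_ne_zero.mpr hb1.symm)).ne_zero
  · exact zero_notMem_vars_lin _ _ _
  · exact zero_notMem_vars_lin _ _ _
  · refine relPrime_of_point _ _ (irr_lin _ _ _ (neg_ne_zero.mpr hb0)) ![0, -a / b, 0, 0] ?_ ?_
    · simp; field_simp; ring
    · simp
      field_simp
      intro h
      apply hab
      linear_combination -h

theorem nzdX (a b c : ℂ) (hb0 : b ≠ 0) (hb1 : b ≠ 1) :
    Ideal.Quotient.mk (Ideal.span {pX₂ a b c}) (X 0 * u₁P * v₁P a b c * (v₁P a b c - u₁P))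
      ∈ nonZeroDivisors (HSurf (pX₂ a b c)) := by
  apply nzd_of_relPrime
  have hb1' : b - 1 ≠ 0 := sub_ne_zero.mpr hb1
  refine ((IsRelPrime.mul_right ?_ ?_).mul_right ?_).mul_right ?_
  · exact relPrime_of_point _ _ (X_prime (i := (0 : Fin 4))).irreducible ![0, 0, 0, 1]
      (by simp) (by simp [pX₂])
  · refine relPrime_of_point _ _ (u₁P_eq ▸ irr_lin _ _ _ one_ne_zero) ![0, -1, 0, 1]
      (by simp [u₁P]) (by simp [pX₂])
  · refine relPrime_of_point _ _ (irr_lin _ _ _ hb0) ![0, -a / b, 0, 1] ?_ (by simp [pX₂])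
    simp [v₁P]; field_simp; ring
  · rw [D_eq]
    refine relPrime_of_point _ _ (irr_lin _ _ _ hb1') ![0, -(a - 1) / (b - 1), 0, 1] ?_
      (by simp [pX₂])
    simp; field_simp; ring

theorem nzdY (a b c : ℂ) (ha0 : a ≠ 0) (ha1 : a ≠ 1) (hb0 : b ≠ 0) (hb1 : b ≠ 1)
    (hc0 : c ≠ 0) (hc1 : c ≠ 1) (hab : a ≠ b) :
    Ideal.Quotient.mk (Ideal.span {pY a b c}) (u₁P * v₁P a b c * (v₁P a b c - u₁P) *
      ((u₁P - v₁P a b c) * X 0 - v₁P a b c)) ∈ nonZeroDivisors (HSurf (pY a b c)) := by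
  apply nzd_of_relPrime
  have hb1' : b - 1 ≠ 0 := sub_ne_zero.mpr hb1
  have ha1' : a - 1 ≠ 0 := sub_ne_zero.mpr ha1
  have hc1' : c - 1 ≠ 0 := sub_ne_zero.mpr hc1
  have hu : Irreducible u₁P := u₁P_eq ▸ irr_lin _ _ _ one_ne_zero
  have hv : Irreducible (v₁P a b c) := irr_lin _ _ _ hb0
  have hD : Irreducible (v₁P a b c - u₁P) := D_eq a b c ▸ irr_lin _ _ _ hb1'
  refine ((IsRelPrime.mul_right ?_ ?_).mul_right ?_).mul_right ?_
  · have h : aeval ![1, -1 / 2, -1 / 2, 0] u₁P = (0 : ℂ) := by simp [u₁P]; norm_num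
    exact relPrime_of_point _ _ hu ![1, -1 / 2, -1 / 2, 0] h (by simp [pY])
  · refine relPrime_of_point _ _ hv ![1, -a / (2 * b), -a / (2 * c), 0] ?_ ?_
    · simp [v₁P]; field_simp; ring
    · simp [pY, ha0, hb0, hc0]
  · refine relPrime_of_point _ _ hD
      ![1, -(a - 1) / (2 * (b - 1)), -(a - 1) / (2 * (c - 1)), 0] ?_ ?_
    · rw [D_eq]; simp; field_simp; ring
    · simp [pY, neg_div, ha1', hb1', hc1', -neg_sub]
  · -- a point off all the bad lines
    obtain ⟨x, hx⟩ : ∃ x : Fin 4 → ℂ,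
        eval x (X 1 * X 2 * u₁P * v₁P a b c * (v₁P a b c - u₁P)) ≠ 0 := by
      by_contra! h
      have h0 : (X 1 * X 2 * u₁P * v₁P a b c * (v₁P a b c - u₁P) : MvPolynomial (Fin 4) ℂ)
          = 0 := MvPolynomial.funext fun x => by rw [h x, map_zero]
      simp [hu.ne_zero, hv.ne_zero, hD.ne_zero] at h0
    simp only [map_mul, map_sub, eval_X, mul_ne_zero_iff] at hx
    obtain ⟨⟨⟨⟨h1, h2⟩, h3⟩, h4⟩, h5⟩ := hx
    have h5' : eval x u₁P - eval x (v₁P a b c) ≠ 0 := by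
      rw [← neg_sub]; exact neg_ne_zero.mpr h5
    set y : Fin 4 → ℂ := ![eval x (v₁P a b c) / (eval x u₁P - eval x (v₁P a b c)), x 1, x 2, 0]
      with hy
    have e1 : aeval y u₁P = eval x u₁P := by simp [u₁P, hy]
    have e2 : aeval y (v₁P a b c) = eval x (v₁P a b c) := by simp [v₁P, hy]
    refine relPrime_of_point _ _ (irr_tau a b c hb0 hb1 hab) y ?_ ?_
    · simp only [map_mul, map_sub, aeval_X, e1, e2]
      simp only [hy, Matrix.cons_val_zero]
      field_simp; ring
    · have : aeval y (pY a b c) = - (x 1 * x 2 * (eval x (v₁P a b c) * eval x u₁P) /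
          (eval x u₁P - eval x (v₁P a b c)) ^ 2) := by
        simp only [pY, map_mul, map_sub, map_add, map_one, map_pow, aeval_X, e1, e2]
        simp only [hy]
        simp
        field_simp; ring
      rw [this]
      refine neg_ne_zero.mpr (div_ne_zero ?_ (pow_ne_zero _ h5'))
      exact mul_ne_zero (mul_ne_zero h1 h2) (mul_ne_zero h4 h3)

/-- Composite of the quotient map and the localization map. -/
def locMap (f h : MvPolynomial (Fin 4) ℂ) :
    MvPolynomial (Fin 4) ℂ →ₐ[ℂ] Localization.Away (Ideal.Quotient.mk (Ideal.span {f}) h) :=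
  (IsScalarTower.toAlgHom ℂ (HSurf f) _).comp (Ideal.Quotient.mkₐ ℂ (Ideal.span {f}))

theorem locMap_apply (f h q : MvPolynomial (Fin 4) ℂ) :
    locMap f h q = algebraMap (HSurf f) _ (Ideal.Quotient.mk _ q) := rfl

theorem locMap_self (f h : MvPolynomial (Fin 4) ℂ) : locMap f h f = 0 := by
  rw [locMap_apply, Ideal.Quotient.eq_zero_iff_mem.mpr (Ideal.mem_span_singleton_self f), map_zero]

theorem locMap_unit (f h : MvPolynomial (Fin 4) ℂ) : IsUnit (locMap f h h) :=
  IsLocalization.Away.algebraMap_isUnit (Ideal.Quotient.mk (Ideal.span {f}) h)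

theorem map_u₁P {B : Type} [CommRing B] [Algebra ℂ B] (g : MvPolynomial (Fin 4) ℂ →ₐ[ℂ] B) :
    g u₁P = 1 + g (X 1) + g (X 2) := by simp [u₁P]

theorem map_v₁P {B : Type} [CommRing B] [Algebra ℂ B] (g : MvPolynomial (Fin 4) ℂ →ₐ[ℂ] B)
    (a b c : ℂ) : g (v₁P a b c) =
      algebraMap ℂ B a + algebraMap ℂ B b * g (X 1) + algebraMap ℂ B c * g (X 2) := by
  simp [v₁P]

/-- The two localized coordinate rings are isomorphic, in terms of their universal properties. -/
theorem abs_equiv (a b c : ℂ) {BX BY : Type} [CommRing BX] [Algebra ℂ BX]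
    [CommRing BY] [Algebra ℂ BY]
    (mX : MvPolynomial (Fin 4) ℂ →ₐ[ℂ] BX) (mY : MvPolynomial (Fin 4) ℂ →ₐ[ℂ] BY)
    (rX : mX (pX₂ a b c) = 0) (rY : mY (pY a b c) = 0)
    (uX : IsUnit (mX (X 0 * u₁P * v₁P a b c * (v₁P a b c - u₁P))))
    (uY : IsUnit (mY (u₁P * v₁P a b c * (v₁P a b c - u₁P) *
      ((u₁P - v₁P a b c) * X 0 - v₁P a b c))))
    (liftX : ∀ p : Fin 4 → BY, aeval p (pX₂ a b c) = 0 →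
      IsUnit (aeval p (X 0 * u₁P * v₁P a b c * (v₁P a b c - u₁P))) →
      ∃ φ : BX →ₐ[ℂ] BY, ∀ q, φ (mX q) = aeval p q)
    (liftY : ∀ p : Fin 4 → BX, aeval p (pY a b c) = 0 →
      IsUnit (aeval p (u₁P * v₁P a b c * (v₁P a b c - u₁P) *
      ((u₁P - v₁P a b c) * X 0 - v₁P a b c))) →
      ∃ φ : BY →ₐ[ℂ] BX, ∀ q, φ (mY q) = aeval p q)
    (extX : ∀ φ ψ : BX →ₐ[ℂ] BX, (∀ i, φ (mX (X i)) = ψ (mX (X i))) → φ = ψ)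
    (extY : ∀ φ ψ : BY →ₐ[ℂ] BY, (∀ i, φ (mY (X i)) = ψ (mY (X i))) → φ = ψ) :
    ∃ e : BX ≃ₐ[ℂ] BY,
      e (mX (X 1)) = mY (X 1) ∧
      e (mX (X 2)) = mY (X 2) ∧
      e (mX (X 0)) * mY (u₁P * v₁P a b c) =
        mY ((u₁P - v₁P a b c) * X 0 - v₁P a b c) ∧
      e (mX (X 3)) =
        e (mX (X 0)) * mY ((v₁P a b c - u₁P) * X 3) := by
  simp only [map_mul, map_sub, IsUnit.mul_iff] at uX uY
  obtain ⟨⟨⟨uXt, uXu⟩, uXv⟩, uXD⟩ := uX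
  obtain ⟨⟨⟨uYu, uYv⟩, uYD⟩, uYt⟩ := uY
  -- forward map
  obtain ⟨T, hT⟩ : ∃ T, T * (mY u₁P * mY (v₁P a b c)) =
      (mY u₁P - mY (v₁P a b c)) * mY (X 0) - mY (v₁P a b c) := by
    obtain ⟨i, hi⟩ := (uYu.mul uYv).exists_left_inv
    exact ⟨((mY u₁P - mY (v₁P a b c)) * mY (X 0) - mY (v₁P a b c)) * i, by
      rw [mul_assoc, hi, mul_one]⟩
  have uT : IsUnit T := by
    rw [← hT] at uYt
    exact (IsUnit.mul_iff.mp uYt).1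
  let p : Fin 4 → BY :=
    ![T, mY (X 1), mY (X 2), T * (mY (v₁P a b c) - mY u₁P) * mY (X 3)]
  have pu : aeval p u₁P = mY u₁P := by rw [map_u₁P, map_u₁P]; simp [p]
  have pv : aeval p (v₁P a b c) = mY (v₁P a b c) := by rw [map_v₁P, map_v₁P]; simp [p]
  obtain ⟨φ, hφ⟩ := liftX p (by
      simp only [pX₂, map_mul, map_sub, map_add, map_one, map_pow, aeval_X, pu, pv]
      simp only [pY, map_mul, map_sub, map_add, map_one, map_pow] at rY
      simp only [p, Matrix.cons_val]
      rw [← (uYu.mul uYv).mul_left_inj, zero_mul]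
      generalize mY u₁P = U at *
      generalize mY (v₁P a b c) = V at *
      generalize mY (X 0) = t at *
      generalize mY (X 1) = u at *
      generalize mY (X 2) = v at *
      generalize mY (X 3) = y at *
      have k1 : (1 + U * T) * V = (U - V) * t := by linear_combination hT
      have k2 : (1 + V * T) * U = (U - V) * (t + 1) := by linear_combination hT
      linear_combination T ^ 3 * (V - U) ^ 2 * rY - T ^ 3 * u * v * (1 + V * T) * U * k1
        - T ^ 3 * u * v * (U - V) * t * k2) (by
      simp only [map_mul, map_sub, aeval_X, pu, pv]
      exact ((uT.mul uYu).mul uYv).mul uYD)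
  -- backward map
  obtain ⟨S, hS⟩ : ∃ S, S * (mX (v₁P a b c) - mX u₁P) =
      - (mX (X 0) * mX u₁P * mX (v₁P a b c) + mX (v₁P a b c)) := by
    obtain ⟨i, hi⟩ := uXD.exists_left_inv
    exact ⟨- (mX (X 0) * mX u₁P * mX (v₁P a b c) + mX (v₁P a b c)) * i, by
      rw [mul_assoc, hi, mul_one]⟩
  obtain ⟨Z, hZ⟩ : ∃ Z, Z * (mX (X 0) * (mX (v₁P a b c) - mX u₁P)) = mX (X 3) := by
    obtain ⟨i, hi⟩ := (uXt.mul uXD).exists_left_inv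
    exact ⟨mX (X 3) * i, by rw [mul_assoc, hi, mul_one]⟩
  let r : Fin 4 → BX :=
    ![S, mX (X 1), mX (X 2), Z]
  have ru : aeval r u₁P = mX u₁P := by rw [map_u₁P, map_u₁P]; simp [r]
  have rv : aeval r (v₁P a b c) = mX (v₁P a b c) := by rw [map_v₁P, map_v₁P]; simp [r]
  have rt : (mX u₁P - mX (v₁P a b c)) * S - mX (v₁P a b c) =
      mX (X 0) * mX u₁P * mX (v₁P a b c) := by linear_combination -hS
  obtain ⟨ψ, hψ⟩ := liftY r (by
      simp only [pY, map_mul, map_sub, map_add, map_one, map_pow, aeval_X, ru, rv]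
      simp only [pX₂, map_mul, map_sub, map_add, map_one, map_pow] at rX
      simp only [r, Matrix.cons_val]
      rw [← ((uXt.pow 3).mul (uXD.pow 2)).mul_left_inj, zero_mul]
      rw [← hZ] at rX
      generalize mX u₁P = U at *
      generalize mX (v₁P a b c) = V at *
      generalize mX (X 0) = t at *
      generalize mX (X 1) = u at *
      generalize mX (X 2) = v at *
      have k1 : S * (V - U) = - ((1 + U * t) * V) := by linear_combination hS
      have k2 : (S + 1) * (V - U) = - ((1 + V * t) * U) := by linear_combination hS
      linear_combination U * V * rX - t ^ 3 * u * v * (S + 1) * (V - U) * k1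
        + t ^ 3 * u * v * ((1 + U * t) * V) * k2) (by
      simp only [map_mul, map_sub, aeval_X, ru, rv]
      simp only [r, Matrix.cons_val]
      rw [rt]
      exact ((uXu.mul uXv).mul uXD).mul ((uXt.mul uXu).mul uXv))
  have φ0 : φ (mX (X 0)) = T := by rw [hφ]; simp [p]
  have φ1 : φ (mX (X 1)) = mY (X 1) := by rw [hφ]; simp [p]
  have φ2 : φ (mX (X 2)) = mY (X 2) := by rw [hφ]; simp [p]
  have φ3 : φ (mX (X 3)) = T * (mY (v₁P a b c) - mY u₁P) * mY (X 3) := by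
    rw [hφ]; simp [p]
  have φu : φ (mX u₁P) = mY u₁P := by rw [hφ, pu]
  have φv : φ (mX (v₁P a b c)) = mY (v₁P a b c) := by rw [hφ, pv]
  have ψ0 : ψ (mY (X 0)) = S := by rw [hψ]; simp [r]
  have ψ1 : ψ (mY (X 1)) = mX (X 1) := by rw [hψ]; simp [r]
  have ψ2 : ψ (mY (X 2)) = mX (X 2) := by rw [hψ]; simp [r]
  have ψ3 : ψ (mY (X 3)) = Z := by rw [hψ]; simp [r]
  have ψu : ψ (mY u₁P) = mX u₁P := by rw [hψ, ru]
  have ψv : ψ (mY (v₁P a b c)) = mX (v₁P a b c) := by rw [hψ, rv]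
  have ψT : ψ T = mX (X 0) := by
    have := congrArg ψ hT
    simp only [map_mul, map_sub, ψ0, ψu, ψv] at this
    rw [rt, mul_assoc] at this
    exact (uXu.mul uXv).mul_left_inj.mp this
  have φS : φ S = mY (X 0) := by
    have := congrArg φ hS
    simp only [map_mul, map_sub, map_neg, map_add, φ0, φu, φv] at this
    refine uYD.mul_left_inj.mp ?_
    linear_combination this - hT
  have φZ : φ Z = mY (X 3) := by
    have := congrArg φ hZ
    simp only [map_mul, map_sub, φ0, φ3, φu, φv] at this
    refine (uT.mul uYD).mul_left_inj.mp ?_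
    linear_combination this
  have c1 : φ.comp ψ = AlgHom.id ℂ _ := by
    apply extY
    intro i
    change φ (ψ (mY (X i))) = mY (X i)
    fin_cases i
    · exact (congrArg φ ψ0).trans φS
    · exact (congrArg φ ψ1).trans φ1
    · exact (congrArg φ ψ2).trans φ2
    · exact (congrArg φ ψ3).trans φZ
  have c2 : ψ.comp φ = AlgHom.id ℂ _ := by
    apply extX
    intro i
    change ψ (φ (mX (X i))) = mX (X i)
    fin_cases i
    · exact (congrArg ψ φ0).trans ψT
    · exact (congrArg ψ φ1).trans ψ1
    · exact (congrArg ψ φ2).trans ψ2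
    · refine (congrArg ψ φ3).trans ?_
      simp only [map_mul, map_sub, ψT, ψu, ψv, ψ3]
      refine Eq.trans ?_ hZ
      ring
  refine ⟨AlgEquiv.ofAlgHom φ ψ c1 c2, φ1, φ2, ?_, ?_⟩
  · change φ (mX (X 0)) * _ = _
    rw [φ0]
    simp only [map_mul, map_sub]
    exact hT
  · change φ (mX (X 3)) = φ (mX (X 0)) * _
    rw [φ0, φ3]
    simp only [map_mul, map_sub]
    ring

theorem loc_equiv (a b c : ℂ) :
    ∃ e : Localization.Away (Ideal.Quotient.mk (Ideal.span {pX₂ a b c})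
        (X 0 * u₁P * v₁P a b c * (v₁P a b c - u₁P))) ≃ₐ[ℂ] Localization.Away (Ideal.Quotient.mk (Ideal.span {pY a b c})
        (u₁P * v₁P a b c * (v₁P a b c - u₁P) *
      ((u₁P - v₁P a b c) * X 0 - v₁P a b c))),
      e (locMap _ _ (X 1)) = locMap _ _ (X 1) ∧
      e (locMap _ _ (X 2)) = locMap _ _ (X 2) ∧
      e (locMap _ _ (X 0)) * locMap _ _ (u₁P * v₁P a b c) =
        locMap _ _ ((u₁P - v₁P a b c) * X 0 - v₁P a b c) ∧
      e (locMap _ _ (X 3)) =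
        e (locMap _ _ (X 0)) * locMap _ _ ((v₁P a b c - u₁P) * X 3) := by
  exact abs_equiv a b c _ _ (locMap_self _ _) (locMap_self _ _) (locMap_unit _ _) (locMap_unit _ _)
    (fun p => exists_hom _ _ p) (fun p => exists_hom _ _ p)
    (fun φ ψ => hom_ext4 _ _ φ ψ) (fun φ ψ => hom_ext4 _ _ φ ψ)

/-- For pairwise distinct `a, b, c ∈ ℂ ∖ {0,1}`, the affine hypersurfaces
`X₂` and `Y` are birationally equivalent: there is a `ℂ`-algebra isomorphism of their
function fields, induced by the substitution `t = (1/v₁ − 1/u₁)·t₁ − 1/u₁`,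
`y = t·u₁v₁·(1/u₁ − 1/v₁)·y₁` with `u, v` unchanged.  (The substitution for `t` is
recorded denominator-free as `φ(t)·u₁·v₁ = (u₁ − v₁)·t₁ − v₁`, and, since
`u₁v₁(1/u₁ − 1/v₁) = v₁ − u₁`, the one for `y` as `φ(y) = φ(t)·(v₁ − u₁)·y₁`.) -/
theorem stmt2 (a b c : ℂ) (ha0 : a ≠ 0) (ha1 : a ≠ 1) (hb0 : b ≠ 0) (hb1 : b ≠ 1)
    (hc0 : c ≠ 0) (hc1 : c ≠ 1) (hab : a ≠ b) (hac : a ≠ c) (hbc : b ≠ c) :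
    ∃ φ : FractionRing (HSurf (pX₂ a b c)) ≃ₐ[ℂ] FractionRing (HSurf (pY a b c)),
      φ (cls (pX₂ a b c) (X 1)) = cls (pY a b c) (X 1) ∧
      φ (cls (pX₂ a b c) (X 2)) = cls (pY a b c) (X 2) ∧
      φ (cls (pX₂ a b c) (X 0)) * cls (pY a b c) (u₁P * v₁P a b c)
        = cls (pY a b c) ((u₁P - v₁P a b c) * X 0 - v₁P a b c) ∧
      φ (cls (pX₂ a b c) (X 3))
        = φ (cls (pX₂ a b c) (X 0)) * cls (pY a b c) ((v₁P a b c - u₁P) * X 3) := by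
  obtain ⟨e, h1, h2, h0, h3⟩ := loc_equiv a b c
  obtain ⟨E, j, hj, hE⟩ := frac_equiv _ _ (nzdX a b c hb0 hb1)
    (nzdY a b c ha0 ha1 hb0 hb1 hc0 hc1 hab) e
  have key : ∀ q, j (locMap (pY a b c) _ q) = cls (pY a b c) q := fun q => hj _
  have keyE : ∀ q, E (cls (pX₂ a b c) q) = j (e (locMap (pX₂ a b c) _ q)) := fun q => hE _
  refine ⟨E, ?_, ?_, ?_, ?_⟩
  · rw [keyE, h1, key]
  · rw [keyE, h2, key]
  · rw [keyE, ← key, ← map_mul, h0, key]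
  · rw [keyE, keyE, ← key, ← map_mul, h3]
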